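/- Let n ≥ 2, let b be a real number with |b| < 1, let F(y) = ‖y‖ + b·y₁ on ℝⁿ, and let a, a' be real numbers with a² + a'² = 1; set v = a e₁ + a' e₂. Define the n×n matrix h by h₁₁ = (1+ab)⁻³(1 + a³b), h₁₂ = h₂₁ = −(1+ab)⁻³ b a'³, h₂₂ = (1+ab)⁻³(1 + b² + 3ab − a³b), h_ii = (1+ab)⁻¹ for 3 ≤ i ≤ n, and h_ij = 0 for all other pairs (i,j) with i ≠ j. Then h is the inverse of the fundamental tensor matrix g(v), i.e., g(v)·h equals the identity matrix. -/

import Mathlib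

/-!
Away from the origin `F = ‖·‖ + b y₁` is smooth, with gradient `ℓ(y) = y / ‖y‖ + b e₁`. Hence
`½ F²` has gradient `F ℓ`, and differentiating once more at a unit vector `v` gives
`g(v)_ij = ℓ_i ℓ_j + F (δ_ij - v_i v_j)` (`fundTensor_apply`). For `v = a e₁ + a' e₂` this matrix
is block diagonal: it is `(1 + ab) δ_ij` on the indices `≥ 3`, and using `a² + a'² = 1` the upper
left `2 × 2` block has entries `1 + b² + 3ab - a³b`, `b a'³`, `1 + a³b` and determinant
`(1 + ab)³`. The matrix `h` is then the blockwise inverse by Cramer's rule; `|b| < 1` and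
`|a| ≤ 1` ensure `1 + ab > 0`.
-/


/-- The Randers norm `F(y) = ‖y‖ + b·y₁` on `ℝⁿ` (Euclidean norm). -/
noncomputable def randersF (n : ℕ) (hn : 0 < n) (b : ℝ)
    (y : EuclideanSpace ℝ (Fin n)) : ℝ :=
  ‖y‖ + b * y ⟨0, hn⟩

/-- The fundamental tensor of the Randers norm: the Hessian matrix of
`½ F²` at `y`, with entries `g_ij(y) = ½ ∂²(F²)/∂yⁱ∂yʲ (y)`. -/
noncomputable def fundTensor (n : ℕ) (hn : 0 < n) (b : ℝ)
    (y : EuclideanSpace ℝ (Fin n)) : Matrix (Fin n) (Fin n) ℝ :=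
  fun i j =>
    fderiv ℝ (fun z => fderiv ℝ (fun w => randersF n hn b w ^ 2 / 2) z
      (EuclideanSpace.single j 1)) y (EuclideanSpace.single i 1)

lemma hasFDerivAt_norm_of_ne {n : ℕ} {z : EuclideanSpace ℝ (Fin n)} (hz : z ≠ 0) :
    HasFDerivAt (fun w : EuclideanSpace ℝ (Fin n) => ‖w‖) (‖z‖⁻¹ • innerSL ℝ z) z := by
  have h1 := (hasStrictFDerivAt_norm_sq z).hasFDerivAt.sqrt (by positivity)
  simp only [Real.sqrt_sq (norm_nonneg _)] at h1
  refine h1.congr_fderiv ?_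
  ext w
  have : ‖z‖ ≠ 0 := norm_ne_zero_iff.mpr hz
  simp
  field_simp

lemma hasFDerivAt_randersF {n : ℕ} (hn : 0 < n) (b : ℝ) {z : EuclideanSpace ℝ (Fin n)}
    (hz : z ≠ 0) :
    HasFDerivAt (randersF n hn b)
      (‖z‖⁻¹ • innerSL ℝ z + b • EuclideanSpace.proj (𝕜 := ℝ) (⟨0, hn⟩ : Fin n)) z :=
  (hasFDerivAt_norm_of_ne hz).add
    ((EuclideanSpace.proj (𝕜 := ℝ) (⟨0, hn⟩ : Fin n)).hasFDerivAt.const_mul b)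

/-- The gradient of `½ F²` away from the origin is `F ℓ`, with `ℓ = z / ‖z‖ + b e₁`. -/
lemma fderiv_half_sq {n : ℕ} (hn : 0 < n) (b : ℝ) {z : EuclideanSpace ℝ (Fin n)}
    (hz : z ≠ 0) (j : Fin n) :
    fderiv ℝ (fun w => randersF n hn b w ^ 2 / 2) z (EuclideanSpace.single j 1) =
      randersF n hn b z * (‖z‖⁻¹ * z j + b * (if j = ⟨0, hn⟩ then 1 else 0)) := by
  have h1 := ((hasFDerivAt_randersF hn b hz).pow 2).mul_const (1 / 2 : ℝ)
  have h2 : (fun w => randersF n hn b w ^ 2 / 2) = fun w => randersF n hn b w ^ 2 * (1 / 2) := by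
    ext w
    ring
  have h3 : HasFDerivAt (fun w => randersF n hn b w ^ 2 * (1 / 2)) _ z := h1
  rw [h2, h3.fderiv]
  simp [EuclideanSpace.inner_single_right, eq_comm]
  split_ifs <;> ring

/-- At a unit vector, `g_ij = ℓ_i ℓ_j + F (δ_ij - v_i v_j)`. -/
lemma fundTensor_apply {n : ℕ} (hn : 0 < n) (b : ℝ) {v : EuclideanSpace ℝ (Fin n)}
    (hv : ‖v‖ = 1) (i j : Fin n) :
    fundTensor n hn b v i j =
      (v i + b * (if i = ⟨0, hn⟩ then 1 else 0)) * (v j + b * (if j = ⟨0, hn⟩ then 1 else 0))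
      + (1 + b * v ⟨0, hn⟩) * ((if i = j then 1 else 0) - v i * v j) := by
  have hv0 : v ≠ 0 := by
    rintro rfl
    simp at hv
  -- The gradient formula holds on a neighbourhood of `v`, so it may be differentiated there.
  have he : (fun z => fderiv ℝ (fun w => randersF n hn b w ^ 2 / 2) z
      (EuclideanSpace.single j 1)) =ᶠ[nhds v] fun z =>
      randersF n hn b z * (‖z‖⁻¹ * z j + b * (if j = ⟨0, hn⟩ then 1 else 0)) := by
    filter_upwards [isOpen_ne.mem_nhds hv0] with z hz using fderiv_half_sq hn b hz j
  have hinv := (hasDerivAt_inv (norm_ne_zero_iff.mpr hv0)).comp_hasFDerivAt v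
    (hasFDerivAt_norm_of_ne hv0)
  have hd := (hasFDerivAt_randersF hn b hv0).mul
    ((hinv.mul (EuclideanSpace.proj (𝕜 := ℝ) j).hasFDerivAt).add_const
      (b * (if j = ⟨0, hn⟩ then 1 else 0)))
  have hd' : HasFDerivAt (fun z : EuclideanSpace ℝ (Fin n) =>
      randersF n hn b z * (‖z‖⁻¹ * z j + b * (if j = ⟨0, hn⟩ then 1 else 0))) _ v := hd
  rw [fundTensor, he.fderiv_eq, hd'.fderiv]
  simp only [randersF]
  simp [EuclideanSpace.inner_single_right, hv, eq_comm]
  split_ifs <;> ring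

/-- The explicit inverse of the fundamental tensor of the Randers norm at
the unit vector `v = a e₁ + a' e₂` (`a² + a'² = 1`). -/
theorem killing_frames_stmt4 (n : ℕ) (hn : 2 ≤ n) (b : ℝ) (hb : |b| < 1)
    (a a' : ℝ) (ha : a ^ 2 + a' ^ 2 = 1)
    (v : EuclideanSpace ℝ (Fin n))
    (hv : v = a • EuclideanSpace.single (⟨0, by omega⟩ : Fin n) 1
        + a' • EuclideanSpace.single (⟨1, by omega⟩ : Fin n) 1)
    (h : Matrix (Fin n) (Fin n) ℝ)
    (hh : h = fun i j =>
      if i = (⟨0, by omega⟩ : Fin n) ∧ j = (⟨0, by omega⟩ : Fin n) then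
        (1 + a * b)⁻¹ ^ 3 * (1 + a ^ 3 * b)
      else if (i = (⟨0, by omega⟩ : Fin n) ∧ j = (⟨1, by omega⟩ : Fin n))
          ∨ (i = (⟨1, by omega⟩ : Fin n) ∧ j = (⟨0, by omega⟩ : Fin n)) then
        -((1 + a * b)⁻¹ ^ 3 * (b * a' ^ 3))
      else if i = (⟨1, by omega⟩ : Fin n) ∧ j = (⟨1, by omega⟩ : Fin n) then
        (1 + a * b)⁻¹ ^ 3 * (1 + b ^ 2 + 3 * a * b - a ^ 3 * b)
      else if i = j then (1 + a * b)⁻¹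
      else 0) :
    fundTensor n (by omega) b v * h = 1 := by
  have hf : (1 + a * b) ≠ 0 := by
    have h1 : |a| ≤ 1 := abs_le_one_iff_mul_self_le_one.mpr (by nlinarith [sq_nonneg a'])
    have h2 : |a * b| < 1 := by
      rw [abs_mul]
      nlinarith [abs_nonneg a, abs_nonneg b]
    linarith [(abs_lt.mp h2).1]
  have h0 : 0 < n := by omega
  set o : Fin n := ⟨0, h0⟩ with ho
  set p : Fin n := ⟨1, by omega⟩ with hp
  have hop : o ≠ p := by simp [ho, hp]
  have hpo : p ≠ o := hop.symm
  have hvk : ∀ k, v k = a * (if k = o then 1 else 0) + a' * (if k = p then 1 else 0) := by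
    intro k
    simp [hv]
  have hn1 : ‖v‖ = 1 := by
    rw [← sq_eq_sq₀ (norm_nonneg _) zero_le_one, EuclideanSpace.real_norm_sq_eq]
    have : ∀ k, v k ^ 2 = a ^ 2 * (if k = o then 1 else 0) + a' ^ 2 * (if k = p then 1 else 0) := by
      intro k
      rw [hvk]
      split_ifs <;> simp_all
    simp [this, Finset.sum_add_distrib, ha]
  have hg := fundTensor_apply h0 b hn1
  rw [← ho] at hg
  generalize fundTensor n h0 b v = g at hg ⊢
  have hvo : v o = a := by simp [hvk, hop]
  have hvp : v p = a' := by simp [hvk, hpo]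
  have hvr : ∀ k, k ≠ o → k ≠ p → v k = 0 := fun k h1 h2 => by simp [hvk, h1, h2]
  -- The entries of `g`, reduced by means of `a² + a'² = 1`.
  have goo : g o o = 1 + b ^ 2 + 3 * a * b - a ^ 3 * b := by
    simp only [hg, hvo, if_true]
    ring
  have gop : g o p = b * a' ^ 3 := by
    simp only [hg, hvo, hvp, hop, hpo, if_true, if_false]
    linear_combination (-a' * b) * ha
  have gpo : g p o = b * a' ^ 3 := by
    simp only [hg, hvo, hvp, hpo, if_true, if_false]
    linear_combination (-a' * b) * ha
  have gpp : g p p = 1 + a ^ 3 * b := by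
    simp only [hg, hvo, hvp, hpo, if_true, if_false]
    linear_combination (-a * b) * ha
  have gr : ∀ i j, (i ≠ o ∧ i ≠ p ∨ j ≠ o ∧ j ≠ p) →
      g i j = (1 + a * b) * (if i = j then 1 else 0) := by
    rintro i j (⟨h1, h2⟩ | ⟨h1, h2⟩)
    · simp [hg, hvo, hvr i h1 h2, h1, mul_comm]
    · simp [hg, hvo, hvr j h1 h2, h1, mul_comm]
  have hdet : (1 + b ^ 2 + 3 * a * b - a ^ 3 * b) * (1 + a ^ 3 * b) - (b * a' ^ 3) ^ 2
      = (1 + a * b) ^ 3 := by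
    have : a' ^ 2 = 1 - a ^ 2 := by linarith
    have h6 : (b * a' ^ 3) ^ 2 = b ^ 2 * (1 - a ^ 2) ^ 3 := by rw [← this]; ring
    rw [h6]
    ring
  have hi : (1 + a * b)⁻¹ ^ 3 * (1 + a * b) ^ 3 = 1 := by
    rw [← mul_pow, inv_mul_cancel₀ hf, one_pow]
  ext i j
  rw [Matrix.mul_apply, Matrix.one_apply]
  by_cases hjo : j = o
  · subst hjo
    have hc : ∀ k, h k o = (if k = o then (1 + a * b)⁻¹ ^ 3 * (1 + a ^ 3 * b) else 0)
        + (if k = p then -((1 + a * b)⁻¹ ^ 3 * (b * a' ^ 3)) else 0) := by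
      intro k
      rw [hh]
      by_cases h1 : k = o <;> by_cases h2 : k = p <;> simp_all
    simp only [hc, mul_add, Finset.sum_add_distrib, mul_ite, mul_zero, Finset.sum_ite_eq',
      Finset.mem_univ, if_true]
    by_cases h1 : i = o
    · subst h1
      rw [goo, gop, if_pos rfl]
      linear_combination (1 + a * b)⁻¹ ^ 3 * hdet + hi
    by_cases h2 : i = p
    · subst h2
      rw [gpo, gpp, if_neg h1]
      ring
    · simp [gr i _ (Or.inl ⟨h1, h2⟩), h1, h2]
  by_cases hjp : j = p
  · subst hjp
    have hc : ∀ k, h k p = (if k = o then -((1 + a * b)⁻¹ ^ 3 * (b * a' ^ 3)) else 0)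
        + (if k = p then (1 + a * b)⁻¹ ^ 3 * (1 + b ^ 2 + 3 * a * b - a ^ 3 * b) else 0) := by
      intro k
      rw [hh]
      by_cases h1 : k = o <;> by_cases h2 : k = p <;> simp_all
    simp only [hc, mul_add, Finset.sum_add_distrib, mul_ite, mul_zero, Finset.sum_ite_eq',
      Finset.mem_univ, if_true]
    by_cases h1 : i = o
    · subst h1
      rw [goo, gop, if_neg hop]
      ring
    by_cases h2 : i = p
    · subst h2
      rw [gpo, gpp, if_pos rfl]
      linear_combination (1 + a * b)⁻¹ ^ 3 * hdet + hi
    · simp [gr i _ (Or.inl ⟨h1, h2⟩), h1, h2]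
  · have hc : ∀ k, h k j = if k = j then (1 + a * b)⁻¹ else 0 := by
      intro k
      rw [hh]
      simp [hjo, hjp]
    simp only [hc, mul_ite, mul_zero, Finset.sum_ite_eq', Finset.mem_univ, if_true]
    rw [gr i j (Or.inr ⟨hjo, hjp⟩)]
    split_ifs
    · field_simp
    · simp
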